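/- Let d ≥ 1 and let (u_n) be a bounded sequence in L²(𝕋^d), with Fourier coefficients û_n : ℤ^d → ℂ, satisfying condition (S): there exists a sequence of positive reals (h_n) tending to zero such that limsup_{n→∞} Σ_{|l| < δ/h_n} |û_n(l)|² → 0 as δ → 0⁺, and limsup_{n→∞} Σ_{|l| > R/h_n} |û_n(l)|² → 0 as R → ∞. Let ν be a finite positive measure on 𝕋^d × 𝕋 which is a weak-∗ accumulation point of the densities (|e^{itΔ}u_n|²), i.e. there is a subsequence (u_{n′}) such that for every continuous a : 𝕋^d → ℂ and every continuous φ : 𝕋 → ℂ, ∫_{𝕋}∫_{𝕋^d} φ(t) a(x) |e^{itΔ}u_{n′}(x)|² dx dt → ∫_{𝕋^d×𝕋} φ(t) a(x) ν(dx,dt). Let ν̂(l,s) := ∫_{𝕋^d×𝕋} e^{−i(l·x+st)} ν(dx,dt) for (l,s) ∈ ℤ^d × ℤ be the Fourier coefficients of ν. Then Σ_{(l,s)∈ℤ^d×ℤ} |ν̂(l,s)|^d < ∞, i.e. ‖ν̂‖_{ℓ^d(ℤ^{d+1})} < ∞. -/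

import Mathlib

open scoped BigOperators Real
open MeasureTheory Matrix Filter

attribute [local instance] Classical.propDecidable

local instance : Fact ((0 : ℝ) < 2 * π) := ⟨by positivity⟩

/-- The solution `e^{itΔ}u(x) = Σ_k û(k) e^{i(k·x - |k|²t)}` of the Schrödinger equation
on the torus `𝕋^d = ℝ^d/2πℤ^d`, as a function on `𝕋^d × 𝕋`, where `c = û` are the
Fourier coefficients of the initial datum `u`. -/
noncomputable def schrodingerSol (d : ℕ) (c : (Fin d → ℤ) → ℂ) :
    (Fin d → AddCircle (2 * π)) × AddCircle (2 * π) → ℂ :=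
  fun p => ∑' k : Fin d → ℤ,
    c k * (∏ i : Fin d, fourier (k i) (p.1 i)) * fourier (-(k ⬝ᵥ k)) p.2

/-- The Euclidean length of a lattice vector `l ∈ ℤ^d`. -/
noncomputable def znorm {d : ℕ} (l : Fin d → ℤ) : ℝ :=
  Real.sqrt (∑ i : Fin d, ((l i : ℝ)) ^ 2)

/-!
The Fourier coefficient of the density `|e^{itΔ}u|²` at the mode `τ = (l, s)` is a constant times
`∑ k, û(k) conj(û(k - l))`, where `k` runs over the lattice points of the hyperplane
`|k - l|² - |k|² = s`. The `d`-th power of such a sum expands into a sum over `d`-tuples of points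
of the same hyperplane. Only finitely many modes `τ ≠ 0` are considered at a time. Fix a finite
family of hyperplanes containing all that matter for them. If the points of a tuple avoid a certain
finite set of frequencies, then one of them is redundant: it lies on each hyperplane of the family
that contains the other `d - 1` points. Moving the redundant point `k j` to `k j - l` gives a tuple
from which both `τ` and the original tuple can be recovered, and so does moving all the points
except `k j`. By AM-GM the sum over tuples is then bounded in terms of `‖u‖` and `d` only,
uniformly in the finite set of modes. The exceptional frequencies are harmless in the limit,
because the mass of `u_n` at low frequencies tends to zero.
-/

section Hyperplanes

variable {ι R : Type*} [Fintype ι] [CommRing R]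

/-- The affine hyperplane `{x | x · a = b}` with coefficients `L = (a, b)`. Since `a = 0` is
allowed, it may also be empty or the whole space. -/
def hyperplane (L : (ι → R) × R) : Set (ι → R) :=
  {x | x ⬝ᵥ L.1 = L.2}

/-- The coefficients of the hyperplane `L` translated by `v`. -/
def translatePlane (v : ι → R) (L : (ι → R) × R) : (ι → R) × R :=
  (L.1, L.2 + v ⬝ᵥ L.1)

/-- The `j`-th point of the tuple `k` lies on every hyperplane of the family `G` that passes
through all the other points: it is a dependent point as far as `G` can see. -/
def IsRedundant {κ : Type*} (G : Set ((ι → R) × R)) (k : κ → ι → R) (j : κ) : Prop :=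
  ∀ L ∈ G, (∀ i, i ≠ j → k i ∈ hyperplane L) → k j ∈ hyperplane L

lemma mem_hyperplane {L : (ι → R) × R} {x : ι → R} : x ∈ hyperplane L ↔ x ⬝ᵥ L.1 = L.2 :=
  Iff.rfl

lemma mem_hyperplane_translatePlane {v x : ι → R} {L : (ι → R) × R} :
    x ∈ hyperplane (translatePlane v L) ↔ x - v ∈ hyperplane L := by
  simp only [mem_hyperplane, translatePlane, sub_dotProduct, sub_eq_iff_eq_add]

lemma translatePlane_zero (L : (ι → R) × R) : translatePlane 0 L = L := by
  simp [translatePlane]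

lemma exists_affine_dependency_of_mem_hyperplane [IsDomain R] {L : (ι → R) × R} (hL : L ≠ 0)
    {x : Option ι → ι → R} (hx : ∀ o, x o ∈ hyperplane L) :
    ∃ c : Option ι → R, c ≠ 0 ∧ ∑ o, c o = 0 ∧ ∑ o, c o • x o = 0 := by
  let A : Matrix (Option ι) (Option ι) R := Matrix.of fun o m => m.elim 1 (x o)
  have hker : ∃ v, v ≠ 0 ∧ A *ᵥ v = 0 := by
    refine ⟨fun m => m.elim (-L.2) L.1, fun hv => hL ?_, ?_⟩
    · exact Prod.ext (funext fun i => congrFun hv (some i)) (neg_eq_zero.1 (congrFun hv none))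
    · ext o
      have := mem_hyperplane.1 (hx o)
      simp only [dotProduct] at this
      simp [A, mulVec, dotProduct, this]
  obtain ⟨c, hc, hcA⟩ :=
    Matrix.exists_vecMul_eq_zero_iff.2 (Matrix.exists_mulVec_eq_zero_iff.1 hker)
  refine ⟨c, hc, ?_, ?_⟩
  · have := congrFun hcA none
    simpa [A, vecMul, dotProduct] using this
  · ext i
    have := congrFun hcA (some i)
    simpa [A, vecMul, dotProduct] using this

/-- The points `k i` are affinely independent, so they span `L` affinely; writing `x` as an affine
combination of them and evaluating the equation of `W j` kills the `j`-th weight. -/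
lemma eq_of_mem_hyperplane [IsDomain R] {L : (ι → R) × R} (hL : L ≠ 0)
    {W : ι → (ι → R) × R} {k : ι → ι → R} {x : ι → R} {j₀ : ι}
    (hkL : ∀ i, k i ∈ hyperplane L) (hxL : x ∈ hyperplane L)
    (hkW : ∀ j, j ≠ j₀ → ∀ i, i ≠ j → k i ∈ hyperplane (W j))
    (hkW' : ∀ j, j ≠ j₀ → k j ∉ hyperplane (W j))
    (hxW : ∀ j, j ≠ j₀ → x ∈ hyperplane (W j)) : x = k j₀ := by
  obtain ⟨c, hc, hsum, hcomb⟩ := exists_affine_dependency_of_mem_hyperplane hL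
    (x := fun o => o.elim x k) (Option.forall.2 ⟨hxL, hkL⟩)
  simp only [Fintype.sum_option, Option.elim] at hsum hcomb
  have hweight : ∀ j, j ≠ j₀ → c (some j) = 0 := by
    intro j hj
    have hdot : c none * (x ⬝ᵥ (W j).1 - (W j).2) +
        ∑ i, c (some i) * (k i ⬝ᵥ (W j).1 - (W j).2) = 0 := by
      have h1 := congrArg (· ⬝ᵥ (W j).1) hcomb
      simp only [add_dotProduct, sum_dotProduct, smul_dotProduct, smul_eq_mul,
        zero_dotProduct] at h1
      simp only [mul_sub, Finset.sum_sub_distrib, ← Finset.sum_mul]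
      linear_combination h1 - (W j).2 * hsum
    rw [mem_hyperplane.1 (hxW j hj), sub_self, mul_zero, zero_add,
      Finset.sum_eq_single_of_mem j (Finset.mem_univ j) fun i _ hi => by
        rw [mem_hyperplane.1 (hkW j hj i hi), sub_self, mul_zero]] at hdot
    exact (mul_eq_zero.1 hdot).resolve_right (sub_ne_zero.2 (hkW' j hj))
  rw [Finset.sum_eq_single_of_mem j₀ (Finset.mem_univ j₀) fun i _ hi => hweight i hi] at hsum
  rw [Finset.sum_eq_single_of_mem j₀ (Finset.mem_univ j₀) fun i _ hi => by
    rw [hweight i hi, zero_smul], ← neg_eq_of_add_eq_zero_right hsum, neg_smul,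
    ← sub_eq_add_neg, ← smul_sub, smul_eq_zero] at hcomb
  refine sub_eq_zero.1 (hcomb.resolve_left fun hnone => hc ?_)
  have hsome : c (some j₀) = 0 := by rwa [hnone, zero_add] at hsum
  funext o
  rcases o with _ | i
  · exact hnone
  · rcases eq_or_ne i j₀ with rfl | hi
    exacts [hsome, hweight i hi]

lemma exists_finset_forall_exists_isRedundant [IsDomain R] {G : Set ((ι → R) × R)}
    (hG : G.Finite) (j₀ : ι) :
    ∃ B : Finset (ι → R), ∀ k : ι → ι → R, ∀ L ∈ G, L ≠ 0 → (∀ i, k i ∈ hyperplane L) →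
      k j₀ ∉ B → ∃ j, IsRedundant G k j := by
  let exceptional (q : ((ι → R) × R) × (ι → (ι → R) × R)) : Set (ι → R) :=
    {x | q.1 ≠ 0 ∧ ∃ k : ι → ι → R, k j₀ = x ∧ (∀ i, k i ∈ hyperplane q.1) ∧
      (∀ j i, i ≠ j → k i ∈ hyperplane (q.2 j)) ∧ ∀ j, k j ∉ hyperplane (q.2 j)}
  have hsub : ∀ q, (exceptional q).Subsingleton := by
    rintro ⟨L, W⟩ _ ⟨hL, k, rfl, hkL, hkW, -⟩ _ ⟨-, k', rfl, hkL', hkW', hkW''⟩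
    exact eq_of_mem_hyperplane hL hkL' (hkL j₀) (fun j _ => hkW' j) (fun j _ => hkW'' j)
      fun j hj => hkW j j₀ hj.symm
  have hfin : (⋃ q ∈ G ×ˢ Set.univ.pi fun _ : ι => G, exceptional q).Finite :=
    (hG.prod (Set.Finite.pi fun _ => hG)).biUnion fun q _ => (hsub q).finite
  refine ⟨hfin.toFinset, fun k L hLG hL hkL hk => ?_⟩
  by_contra! hnot
  simp only [IsRedundant] at hnot
  push Not at hnot
  choose W hWG hkW hkW' using hnot
  refine hk (hfin.mem_toFinset.2 (Set.mem_biUnion (x := (L, W)) ?_ ?_))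
  · exact ⟨hLG, fun j _ => hWG j⟩
  · exact ⟨hL, k, rfl, hkL, hkW, hkW'⟩

end Hyperplanes

section Tuples

variable {α β κ : Type*} [Fintype κ]

/-- The pairs of an index `τ ∈ F` and a `κ`-tuple with entries in `Q τ`; they index the expansion
of a sum of powers of sums. -/
noncomputable def tuplesOver (F : Finset α) (Q : α → Finset β) : Finset (α × (κ → β)) :=
  (F.sigma fun τ => Fintype.piFinset fun _ : κ => Q τ).map
    (Equiv.sigmaEquivProd α (κ → β)).toEmbedding

lemma mem_tuplesOver {F : Finset α} {Q : α → Finset β} {p : α × (κ → β)} :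
    p ∈ tuplesOver F Q ↔ p.1 ∈ F ∧ ∀ i, p.2 i ∈ Q p.1 := by
  simp [tuplesOver, Finset.mem_map_equiv]

lemma sum_pow_card_eq_sum_tuplesOver {S : Type*} [CommSemiring S] (F : Finset α)
    (Q : α → Finset β) (f : α → β → S) :
    ∑ τ ∈ F, (∑ k ∈ Q τ, f τ k) ^ Fintype.card κ =
      ∑ p ∈ tuplesOver (κ := κ) F Q, ∏ i, f p.1 (p.2 i) := by
  rw [tuplesOver, Finset.sum_map, Finset.sum_sigma]
  refine Finset.sum_congr rfl fun τ _ => ?_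
  rw [← Finset.card_univ, ← Finset.prod_const, Finset.prod_univ_sum]
  rfl

variable {S : Type*} [CommSemiring S] [PartialOrder S] [IsOrderedRing S]

lemma sum_prod_le_pow_card {f : β → S} (hf : ∀ b, 0 ≤ f b) {M : S}
    (hM : ∀ Q : Finset β, ∑ b ∈ Q, f b ≤ M) {T : Finset α} {y : α → κ → β}
    (hy : Set.InjOn y T) : ∑ t ∈ T, ∏ i, f (y t i) ≤ M ^ Fintype.card κ := by
  let Q : Finset β := T.biUnion fun t => Finset.univ.image (y t)
  have hsub : T.image y ⊆ Fintype.piFinset fun _ : κ => Q := by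
    intro z hz
    obtain ⟨t, ht, rfl⟩ := Finset.mem_image.1 hz
    exact Fintype.mem_piFinset.2 fun i => Finset.mem_biUnion.2
      ⟨t, ht, Finset.mem_image_of_mem _ (Finset.mem_univ i)⟩
  calc ∑ t ∈ T, ∏ i, f (y t i)
      = ∑ z ∈ T.image y, ∏ i, f (z i) := (Finset.sum_image (f := fun z => ∏ i, f (z i)) hy).symm
    _ ≤ ∑ z ∈ Fintype.piFinset fun _ : κ => Q, ∏ i, f (z i) :=
        Finset.sum_le_sum_of_subset_of_nonneg hsub fun z _ _ => Finset.prod_nonneg fun i _ => hf _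
    _ = (∑ b ∈ Q, f b) ^ Fintype.card κ := by
        rw [← Finset.card_univ, ← Finset.prod_const, Finset.prod_univ_sum]
    _ ≤ M ^ Fintype.card κ := pow_le_pow_left₀ (Finset.sum_nonneg fun b _ => hf b) (hM Q) _

lemma sum_prod_mul_prod_le_pow_card {a : β → ℝ} {M : ℝ}
    (hM : ∀ Q : Finset β, ∑ b ∈ Q, a b ^ 2 ≤ M) {T : Finset α} {y z : α → κ → β}
    (hy : Set.InjOn y T) (hz : Set.InjOn z T) :
    ∑ t ∈ T, (∏ i, a (y t i)) * ∏ i, a (z t i) ≤ M ^ Fintype.card κ := by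
  have hsq : ∀ w : α → κ → β, Set.InjOn w T →
      ∑ t ∈ T, (∏ i, a (w t i)) ^ 2 ≤ M ^ Fintype.card κ := by
    intro w hw
    simp only [← Finset.prod_pow]
    exact sum_prod_le_pow_card (fun b => sq_nonneg (a b)) hM hw
  have hamgm := Finset.sum_le_sum fun t (_ : t ∈ T) =>
    two_mul_le_add_sq (∏ i, a (y t i)) (∏ i, a (z t i))
  simp only [mul_assoc, ← Finset.mul_sum, Finset.sum_add_distrib] at hamgm
  linarith [hsq y hy, hsq z hz]

end Tuples

section Configurations

variable {V S κ : Type*} [AddCommGroup V]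

/-- The tuple of the configuration `p = ((l, s), k)` with its `j`-th point moved from one end of the
resonant pair `(k j, k j - l)` to the other. -/
noncomputable def shiftAt (j : κ) (p : (V × S) × (κ → V)) : κ → V :=
  Function.update p.2 j (p.2 j - p.1.1)

variable [AddCommGroup S]

/-- The exchange of the two ends `k i` and `k i - l` of all resonant pairs, which turns the mode
`(l, s)` into its opposite. -/
def reflect (p : (V × S) × (κ → V)) : (V × S) × (κ → V) :=
  (-p.1, fun i => p.2 i - p.1.1)

lemma reflect_injective : Function.Injective (reflect : (V × S) × (κ → V) → _) :=
  Function.Involutive.injective fun p => by simp [reflect]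

lemma prod_shiftAt_mul_prod_shiftAt_reflect [Fintype κ] {A : Type*} [CommMonoid A] (a : V → A)
    (j : κ) (p : (V × S) × (κ → V)) :
    (∏ i, a (shiftAt j p i)) * ∏ i, a (shiftAt j (reflect p) i) =
      ∏ i, a (p.2 i) * a (p.2 i - p.1.1) := by
  rw [← Finset.prod_mul_distrib]
  refine Finset.prod_congr rfl fun i _ => ?_
  rcases eq_or_ne i j with rfl | hi
  · simp [shiftAt, reflect, mul_comm]
  · simp [shiftAt, reflect, hi]

end Configurations

section Resonance

variable {ι κ R : Type*} [Fintype ι] [CommRing R]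

/-- The coefficients of the resonance hyperplane of the space-time mode `τ = (l, s)`: it consists of
the `k` with `|k - l|² - |k|² = s`, i.e. `2 k · l = |l|² - s`. -/
def resonance (τ : (ι → R) × R) : (ι → R) × R :=
  ((2 : R) • τ.1, τ.1 ⬝ᵥ τ.1 - τ.2)

lemma mem_hyperplane_resonance {τ : (ι → R) × R} {k : ι → R} :
    k ∈ hyperplane (resonance τ) ↔ 2 * (k ⬝ᵥ τ.1) = τ.1 ⬝ᵥ τ.1 - τ.2 := by
  simp [mem_hyperplane, resonance, dotProduct_smul]

lemma sub_mem_hyperplane_resonance_neg {τ : (ι → R) × R} {k : ι → R} :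
    k - τ.1 ∈ hyperplane (resonance (-τ)) ↔ k ∈ hyperplane (resonance τ) := by
  simp only [mem_hyperplane_resonance, Prod.fst_neg, Prod.snd_neg, dotProduct_neg, neg_dotProduct,
    sub_dotProduct]
  constructor <;> intro h <;> linear_combination -h

/-- The hyperplanes against which redundancy is tested: the resonance hyperplanes of the modes in
`F`, and their translates by the differences of two such modes. -/
def testPlanes (F : Set ((ι → R) × R)) : Set ((ι → R) × R) :=
  Set.image2 (fun τ τ' => translatePlane (τ.1 - τ'.1) (resonance τ')) F F

lemma resonance_mem_testPlanes {F : Set ((ι → R) × R)} {τ : (ι → R) × R} (hτ : τ ∈ F) :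
    resonance τ ∈ testPlanes F :=
  ⟨τ, hτ, τ, hτ, by simp only [sub_self, translatePlane_zero]⟩

/-- The pairs of a mode `τ ∈ F` and a tuple of points resonant with `τ` whose `j`-th point is
redundant for the test planes of `F`. -/
def redundantConfigs (F : Set ((ι → R) × R)) (j : κ) : Set (((ι → R) × R) × (κ → ι → R)) :=
  {p | p.1 ∈ F ∧ (∀ i, p.2 i ∈ hyperplane (resonance p.1)) ∧ IsRedundant (testPlanes F) p.2 j}

variable [LinearOrder R] [IsStrictOrderedRing R]

/-- If `p` and `q` have the same shift, redundancy puts the `j`-th point of each on the resonance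
hyperplane of the other. Hence the difference `l - l'` of their spatial frequencies, which is the
difference of the two points, is orthogonal to `l` and to `l'`. -/
lemma injOn_shiftAt {j : κ} {S : Set (((ι → R) × R) × (κ → ι → R))}
    (hres : ∀ p ∈ S, ∀ i, p.2 i ∈ hyperplane (resonance p.1))
    (hred : ∀ p ∈ S, ∀ q ∈ S, IsRedundant {resonance q.1} p.2 j) :
    Set.InjOn (shiftAt j) S := by
  rintro ⟨⟨l, s⟩, k⟩ hp ⟨⟨l', s'⟩, k'⟩ hq heq
  have hoff : ∀ i, i ≠ j → k i = k' i := fun i hi => by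
    simpa [shiftAt, hi] using congrFun heq i
  have hon : k j - l = k' j - l' := by simpa [shiftAt] using congrFun heq j
  have hpp := mem_hyperplane_resonance.1 (hres _ hp j)
  have hqq := mem_hyperplane_resonance.1 (hres _ hq j)
  have hpq := mem_hyperplane_resonance.1 <| hred _ hp _ hq _ rfl fun i hi => by
    simpa only [hoff i hi] using hres _ hq i
  have hqp := mem_hyperplane_resonance.1 <| hred _ hq _ hp _ rfl fun i hi => by
    simpa only [← hoff i hi] using hres _ hp i
  dsimp only at hpp hqq hpq hqp
  have hl : l = l' := by
    have hdiff : k j - k' j = l - l' := by linear_combination hon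
    rw [← sub_eq_zero, ← dotProduct_self_eq_zero]
    nth_rewrite 1 [← hdiff]
    simp only [dotProduct_sub, sub_dotProduct]
    linarith
  subst hl
  have hj : k j = k' j := sub_left_injective hon
  have hk : k = k' := funext fun i => by
    rcases eq_or_ne i j with rfl | hi
    exacts [hj, hoff i hi]
  subst hk
  have hs : s = s' := by linarith
  rw [hs]

lemma injOn_shiftAt_redundantConfigs (F : Set ((ι → R) × R)) (j : κ) :
    Set.InjOn (shiftAt j) (redundantConfigs F j) := by
  refine injOn_shiftAt (fun p hp => hp.2.1) fun p hp q hq => ?_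
  rintro _ rfl
  exact hp.2.2 _ (resonance_mem_testPlanes hq.1)

lemma injOn_shiftAt_comp_reflect_redundantConfigs (F : Set ((ι → R) × R)) (j : κ) :
    Set.InjOn (shiftAt j ∘ reflect) (redundantConfigs F j) := by
  refine Set.InjOn.comp (t := reflect '' redundantConfigs F j) (injOn_shiftAt ?_ ?_)
    reflect_injective.injOn (Set.mapsTo_image _ _)
  · rintro _ ⟨p, hp, rfl⟩ i
    exact sub_mem_hyperplane_resonance_neg.2 (hp.2.1 i)
  · rintro _ ⟨p, hp, rfl⟩ _ ⟨q, hq, rfl⟩ _ rfl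
    have htest : ∀ i, (reflect p).2 i ∈ hyperplane (resonance (reflect q).1) ↔
        p.2 i ∈ hyperplane (translatePlane (p.1.1 - q.1.1) (resonance q.1)) := by
      intro i
      rw [mem_hyperplane_translatePlane, ← sub_mem_hyperplane_resonance_neg (τ := q.1),
        sub_sub, sub_add_cancel]
      rfl
    simp only [htest]
    exact hp.2.2 _ ⟨p.1, hp.1, q.1, hq.1, rfl⟩

lemma resonance_ne_zero {τ : (ι → R) × R} (hτ : τ ≠ 0) : resonance τ ≠ 0 := by
  intro h
  have hl : τ.1 = 0 := by simpa [resonance] using congrArg Prod.fst h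
  have hs : τ.2 = 0 := by simpa [resonance, hl] using congrArg Prod.snd h
  exact hτ (Prod.ext hl hs)

/-- Expanding the powers turns the left-hand side into a sum over tuples of resonant points. Every
tuple has a redundant point, and once the index `j` of that point is fixed, AM-GM splits the summand
into two products of squares, each over a tuple which determines the original one. -/
lemma exists_finset_sum_pow_resonant_le [Nonempty ι] {F : Finset ((ι → R) × R)} (hF : 0 ∉ F) :
    ∃ B : Finset (ι → R), ∀ (a : (ι → R) → ℝ) (M : ℝ),
      (∀ Q : Finset (ι → R), ∑ k ∈ Q, a k ^ 2 ≤ M) →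
      ∀ Q : (ι → R) × R → Finset (ι → R),
        (∀ τ ∈ F, ∀ k ∈ Q τ, k ∈ hyperplane (resonance τ) ∧ k ∉ B) →
        ∑ τ ∈ F, (∑ k ∈ Q τ, a k * a (k - τ.1)) ^ Fintype.card ι ≤
          Fintype.card ι * M ^ Fintype.card ι := by
  obtain ⟨j₀⟩ := ‹Nonempty ι›
  obtain ⟨B, hB⟩ := exists_finset_forall_exists_isRedundant
    (G := testPlanes (F : Set ((ι → R) × R))) (F.finite_toSet.image2 _ F.finite_toSet) j₀
  refine ⟨B, fun a M hM Q hQ => ?_⟩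
  let T : Finset (((ι → R) × R) × (ι → ι → R)) := tuplesOver F Q
  have hcover : ∀ p ∈ T, ∃ j, p ∈ redundantConfigs (F : Set ((ι → R) × R)) j := by
    intro p hp
    obtain ⟨hpF, hpQ⟩ := mem_tuplesOver.1 hp
    have hpres : ∀ i, p.2 i ∈ hyperplane (resonance p.1) := fun i => (hQ _ hpF _ (hpQ i)).1
    obtain ⟨j, hj⟩ := hB p.2 _ (resonance_mem_testPlanes hpF)
      (resonance_ne_zero (ne_of_mem_of_not_mem hpF hF)) hpres (hQ _ hpF _ (hpQ j₀)).2
    exact ⟨j, hpF, hpres, hj⟩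
  choose! J hJ using hcover
  have hclass : ∀ j, ∑ p ∈ T with J p = j, ∏ i, a (p.2 i) * a (p.2 i - p.1.1) ≤
      M ^ Fintype.card ι := by
    intro j
    have hsub : ((T.filter (J · = j) : Finset _) : Set _) ⊆
        redundantConfigs (F : Set ((ι → R) × R)) j := by
      intro p hp
      obtain ⟨hpT, rfl⟩ := Finset.mem_filter.1 hp
      exact hJ p hpT
    simp only [← prod_shiftAt_mul_prod_shiftAt_reflect a j]
    exact sum_prod_mul_prod_le_pow_card hM ((injOn_shiftAt_redundantConfigs _ j).mono hsub)
      ((injOn_shiftAt_comp_reflect_redundantConfigs _ j).mono hsub)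
  calc ∑ τ ∈ F, (∑ k ∈ Q τ, a k * a (k - τ.1)) ^ Fintype.card ι
      = ∑ p ∈ T, ∏ i, a (p.2 i) * a (p.2 i - p.1.1) :=
        sum_pow_card_eq_sum_tuplesOver F Q fun τ k => a k * a (k - τ.1)
    _ = ∑ j, ∑ p ∈ T with J p = j, ∏ i, a (p.2 i) * a (p.2 i - p.1.1) :=
        (Finset.sum_fiberwise T J _).symm
    _ ≤ ∑ _j : ι, M ^ Fintype.card ι := Finset.sum_le_sum fun j _ => hclass j
    _ = Fintype.card ι * M ^ Fintype.card ι := by simp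

end Resonance

section Characters

variable {ι : Type*} [Fintype ι] {T : ℝ}

/-- The character `e^{i(l·x + st)}` (for `T = 2π`) of the space-time torus with mode
`τ = (l, s)`. -/
noncomputable def spacetimeChar (τ : (ι → ℤ) × ℤ) (p : (ι → AddCircle T) × AddCircle T) : ℂ :=
  (∏ i, fourier (τ.1 i) (p.1 i)) * fourier τ.2 p.2

lemma continuous_spacetimeChar (τ : (ι → ℤ) × ℤ) :
    Continuous (spacetimeChar (T := T) τ) := by
  unfold spacetimeChar
  fun_prop

lemma norm_spacetimeChar (τ : (ι → ℤ) × ℤ) (p : (ι → AddCircle T) × AddCircle T) :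
    ‖spacetimeChar τ p‖ = 1 := by
  have hnorm : ∀ (n : ℤ) (t : AddCircle T), ‖(fourier n t : ℂ)‖ = 1 := fun n t => by
    rw [fourier_apply, Circle.norm_coe]
  simp only [spacetimeChar, norm_mul, norm_prod, hnorm, Finset.prod_const_one, mul_one]

lemma norm_mul_spacetimeChar (z : ℂ) (τ : (ι → ℤ) × ℤ) (p : (ι → AddCircle T) × AddCircle T) :
    ‖z * spacetimeChar τ p‖ = ‖z‖ := by
  rw [norm_mul, norm_spacetimeChar, mul_one]

lemma spacetimeChar_add (τ τ' : (ι → ℤ) × ℤ) (p : (ι → AddCircle T) × AddCircle T) :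
    spacetimeChar (τ + τ') p = spacetimeChar τ p * spacetimeChar τ' p := by
  simp only [spacetimeChar, Prod.fst_add, Prod.snd_add, Pi.add_apply, fourier_add,
    Finset.prod_mul_distrib]
  ring

lemma spacetimeChar_neg (τ : (ι → ℤ) × ℤ) (p : (ι → AddCircle T) × AddCircle T) :
    spacetimeChar (-τ) p = starRingEnd ℂ (spacetimeChar τ p) := by
  simp only [spacetimeChar, Prod.fst_neg, Prod.snd_neg, Pi.neg_apply, fourier_neg, map_mul,
    map_prod]

variable [hT : Fact (0 < T)]

lemma integral_fourier (n : ℤ) :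
    ∫ t : AddCircle T, (fourier n t : ℂ) = if n = 0 then (T : ℂ) else 0 := by
  split_ifs with hn
  · simp [hn, AddCircle.measure_univ, measureReal_def, hT.out.le]
  · exact integral_eq_zero_of_add_right_eq_neg (fourier_add_half_inv_index hn hT.out)

lemma integral_spacetimeChar (τ : (ι → ℤ) × ℤ) :
    ∫ p, spacetimeChar (T := T) τ p =
      if τ = 0 then (T : ℂ) ^ (Fintype.card ι + 1) else 0 := by
  unfold spacetimeChar
  rw [Measure.volume_eq_prod,
    integral_prod_mul (fun x : ι → AddCircle T => ∏ i, (fourier (τ.1 i) (x i) : ℂ))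
      (fun t : AddCircle T => (fourier τ.2 t : ℂ)),
    integral_fintype_prod_volume_eq_prod (fun i (x : AddCircle T) => (fourier (τ.1 i) x : ℂ))]
  simp only [integral_fourier, Finset.prod_ite_zero, Finset.prod_const, Finset.card_univ,
    Finset.mem_univ, forall_const, ite_zero_mul_ite_zero, pow_succ, Prod.ext_iff, funext_iff,
    Prod.fst_zero, Prod.snd_zero, Pi.zero_apply]

end Characters

section SchrodingerDensity

variable {d : ℕ}

/-- The space-time mode of the plane wave solution `e^{i(k·x - |k|²t)}`. -/
def schrodingerMode (k : Fin d → ℤ) : (Fin d → ℤ) × ℤ :=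
  (k, -(k ⬝ᵥ k))

lemma schrodingerMode_sub_eq_iff {k j : Fin d → ℤ} {τ : (Fin d → ℤ) × ℤ} :
    schrodingerMode k - schrodingerMode j = τ ↔
      j = k - τ.1 ∧ k ∈ hyperplane (resonance τ) := by
  rw [Prod.ext_iff, mem_hyperplane_resonance]
  simp only [schrodingerMode, Prod.fst_sub, Prod.snd_sub]
  rw [sub_eq_iff_eq_add, ← sub_eq_iff_eq_add', eq_comm (b := j)]
  refine and_congr_right fun hj => ?_
  subst hj
  simp only [dotProduct_sub, sub_dotProduct, dotProduct_comm τ.1 k]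
  constructor <;> intro h <;> linear_combination -h

lemma schrodingerSol_eq_tsum (c : (Fin d → ℤ) → ℂ)
    (p : (Fin d → AddCircle (2 * π)) × AddCircle (2 * π)) :
    schrodingerSol d c p = ∑' k, c k * spacetimeChar (schrodingerMode k) p := by
  simp only [schrodingerSol, spacetimeChar, schrodingerMode, mul_assoc]

/-- The `tsum` in `schrodingerSol` takes the junk value `0` off the absolutely summable case. -/
lemma schrodingerSol_eq_zero_of_not_summable {c : (Fin d → ℤ) → ℂ}
    (hc : ¬Summable fun k => ‖c k‖) : schrodingerSol d c = 0 := by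
  funext p
  rw [schrodingerSol_eq_tsum]
  refine tsum_eq_zero_of_not_summable fun h => hc ?_
  simpa only [norm_mul_spacetimeChar] using h.norm

lemma spacetimeChar_mul_normSq_schrodingerSol {c : (Fin d → ℤ) → ℂ} (hc : Summable fun k => ‖c k‖)
    (τ : (Fin d → ℤ) × ℤ) (p : (Fin d → AddCircle (2 * π)) × AddCircle (2 * π)) :
    spacetimeChar (-τ) p * ((‖schrodingerSol d c p‖ ^ 2 : ℝ) : ℂ) =
      ∑' q : (Fin d → ℤ) × (Fin d → ℤ), c q.1 * starRingEnd ℂ (c q.2) *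
        spacetimeChar (schrodingerMode q.1 - schrodingerMode q.2 - τ) p := by
  have hsum : Summable fun k => ‖c k * spacetimeChar (schrodingerMode k) p‖ := by
    simpa only [norm_mul_spacetimeChar] using hc
  rw [Complex.ofReal_pow, ← Complex.mul_conj', schrodingerSol_eq_tsum, Complex.conj_tsum,
    tsum_mul_tsum_of_summable_norm hsum (by simpa only [RCLike.norm_conj] using hsum),
    ← tsum_mul_left]
  refine tsum_congr fun q => ?_
  simp only [sub_eq_add_neg, spacetimeChar_add, spacetimeChar_neg, map_mul]
  ring

lemma integral_spacetimeChar_mul_normSq_schrodingerSol {c : (Fin d → ℤ) → ℂ}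
    (hc : Summable fun k => ‖c k‖) (τ : (Fin d → ℤ) × ℤ) :
    ∫ p, spacetimeChar (-τ) p * ((‖schrodingerSol d c p‖ ^ 2 : ℝ) : ℂ) =
      (2 * π : ℂ) ^ (d + 1) *
        ∑' k : hyperplane (resonance τ), c k * starRingEnd ℂ (c (k - τ.1)) := by
  let coeff (q : (Fin d → ℤ) × (Fin d → ℤ)) : ℂ := c q.1 * starRingEnd ℂ (c q.2)
  have hcoeff : Summable fun q => ‖coeff q‖ := by
    have hconj : Summable fun k => ‖starRingEnd ℂ (c k)‖ := by
      simpa only [RCLike.norm_conj] using hc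
    exact Summable.mul_norm (f := c) (g := fun k => starRingEnd ℂ (c k)) hc hconj
  have hmode : ∀ q, ∫ p, coeff q *
      spacetimeChar (T := 2 * π) (schrodingerMode q.1 - schrodingerMode q.2 - τ) p =
        (2 * π : ℂ) ^ (d + 1) *
          if q.2 = q.1 - τ.1 ∧ q.1 ∈ hyperplane (resonance τ) then coeff q else 0 := by
    intro q
    simp only [integral_const_mul, integral_spacetimeChar, sub_eq_zero, schrodingerMode_sub_eq_iff]
    split_ifs <;> simp [mul_comm]
  simp only [spacetimeChar_mul_normSq_schrodingerSol hc]
  rw [← integral_tsum_of_summable_integral_norm]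
  · rw [tsum_congr hmode, tsum_mul_left, Summable.tsum_prod]
    · congr 1
      rw [tsum_subtype (hyperplane (resonance τ)) fun k => c k * starRingEnd ℂ (c (k - τ.1))]
      refine tsum_congr fun k => ?_
      rw [tsum_eq_single (k - τ.1) fun j hj => if_neg fun h => hj h.1]
      simp [Set.indicator_apply, coeff]
    · refine hcoeff.of_norm_bounded fun q => ?_
      split_ifs
      exacts [le_rfl, by simp]
  · intro q
    exact (continuous_const.mul (continuous_spacetimeChar _)).integrable_of_hasCompactSupport
      (HasCompactSupport.of_compactSpace _)
  · simp only [norm_mul_spacetimeChar, integral_const, smul_eq_mul]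
    exact hcoeff.mul_left _

end SchrodingerDensity

section CorrelationSums

lemma summable_mul_sub_of_summable_sq {V : Type*} [AddCommGroup V] {a : V → ℝ}
    (ha : Summable fun k => a k ^ 2) (l : V) : Summable fun k => a k * a (k - l) := by
  have hshift : Summable fun k => a (k - l) ^ 2 := (Equiv.subRight l).summable_iff.2 ha
  refine (ha.add hshift).of_norm_bounded fun k => ?_
  rw [Real.norm_eq_abs, abs_le]
  constructor <;> nlinarith [sq_nonneg (a k + a (k - l)), sq_nonneg (a k - a (k - l))]

lemma tsum_subtype_le_tsum_diff_add_sum {α : Type*} {f : α → ℝ} (hf : ∀ k, 0 ≤ f k)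
    (hsum : Summable f) (s : Set α) (B : Finset α) :
    ∑' k : s, f k ≤ ∑' k : ↥(s \ B), f k + ∑ k ∈ B, f k := by
  rw [tsum_subtype s, tsum_subtype (s \ B), ← Finset.tsum_subtype' B f, tsum_subtype (B : Set α),
    ← (hsum.indicator _).tsum_add (hsum.indicator _)]
  refine (hsum.indicator s).tsum_le_tsum (fun k => ?_)
    ((hsum.indicator _).add (hsum.indicator _))
  by_cases hkB : k ∈ B <;> by_cases hks : k ∈ s <;> simp [hkB, hks, hf k]

variable {ι R : Type*} [Fintype ι] [CommRing R] [LinearOrder R] [IsStrictOrderedRing R]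

lemma exists_finset_sum_pow_tsum_resonant_le [Nonempty ι] {F : Finset ((ι → R) × R)}
    (hF : 0 ∉ F) :
    ∃ B : Finset (ι → R), ∀ (a : (ι → R) → ℝ) (M : ℝ),
      (∀ Q : Finset (ι → R), ∑ k ∈ Q, a k ^ 2 ≤ M) →
      ∑ τ ∈ F, (∑' k : ↥(hyperplane (resonance τ) \ B), a k * a (k - τ.1)) ^ Fintype.card ι ≤
        Fintype.card ι * M ^ Fintype.card ι := by
  obtain ⟨B, hB⟩ := exists_finset_sum_pow_resonant_le hF
  refine ⟨B, fun a M hM => ?_⟩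
  have hsum := summable_mul_sub_of_summable_sq (summable_of_sum_le (fun k => sq_nonneg (a k)) hM)
  have hlim : ∀ τ ∈ F, Tendsto (fun Q : Finset (ι → R) =>
      (∑ k ∈ Q with k ∈ hyperplane (resonance τ) \ B, a k * a (k - τ.1)) ^ Fintype.card ι) atTop
      (nhds ((∑' k : ↥(hyperplane (resonance τ) \ B), a k * a (k - τ.1)) ^ Fintype.card ι)) := by
    intro τ _
    rw [tsum_subtype (hyperplane (resonance τ) \ B) fun k => a k * a (k - τ.1)]
    have := ((hsum τ.1).indicator (hyperplane (resonance τ) \ B)).hasSum.pow (Fintype.card ι)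
    simpa only [Set.indicator_apply, Finset.sum_filter,
      SummationFilter.unconditional_filter] using this
  refine le_of_tendsto' (tendsto_finsetSum F hlim) fun Q => hB a M hM _ fun τ _ k hk => ?_
  exact (Finset.mem_filter.1 hk).2

end CorrelationSums

section Limits

variable {σ : Type*} {L : Filter σ}

lemma sum_pow_le_of_tendsto [L.NeBot] {α : Type*} {F : Finset α} {A S e : σ → α → ℝ} {N : α → ℝ}
    {p : ℕ} {C : ℝ} (hA : ∀ τ ∈ F, Tendsto (fun n => A n τ) L (nhds (N τ)))
    (he : ∀ τ ∈ F, Tendsto (fun n => e n τ) L (nhds 0)) (hN : ∀ τ ∈ F, 0 ≤ N τ)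
    (hS : ∀ n, ∀ τ ∈ F, 0 ≤ S n τ) (hAS : ∀ n, ∀ τ ∈ F, A n τ ≤ S n τ + e n τ)
    (hC : ∀ n, ∑ τ ∈ F, S n τ ^ p ≤ C) : ∑ τ ∈ F, N τ ^ p ≤ C := by
  have hlim : ∀ τ ∈ F, Tendsto (fun n => max (A n τ - e n τ) 0 ^ p) L (nhds (N τ ^ p)) := by
    intro τ hτ
    have := (((hA τ hτ).sub (he τ hτ)).max (tendsto_const_nhds (x := 0))).pow p
    rwa [sub_zero, max_eq_left (hN τ hτ)] at this
  refine le_of_tendsto' (tendsto_finsetSum F hlim) fun n => (hC n).trans' ?_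
  refine Finset.sum_le_sum fun τ hτ => pow_le_pow_left₀ (le_max_right _ _) ?_ p
  exact max_le (sub_le_iff_le_add.2 (hAS n τ hτ)) (hS n τ hτ)

lemma tendsto_zero_of_tendsto_limsup_zero {κ E : Type*} [NormedAddCommGroup E] {u : σ → κ → E}
    (hsq : ∀ n, Summable fun k => ‖u n k‖ ^ 2) (hbd : ∃ M : ℝ, ∀ n, ∑' k, ‖u n k‖ ^ 2 ≤ M)
    {h : σ → ℝ} (hpos : ∀ n, 0 < h n) (hto : Tendsto h L (nhds 0)) {w : κ → ℝ}
    (hlow : Tendsto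
      (fun δ => limsup (fun n => ∑' k, if w k < δ / h n then ‖u n k‖ ^ 2 else 0) L)
      (nhdsWithin 0 (Set.Ioi 0)) (nhds 0)) (k : κ) :
    Tendsto (fun n => u n k) L (nhds 0) := by
  obtain ⟨M, hM⟩ := hbd
  have hnonneg : ∀ n r j, 0 ≤ if w j < r then ‖u n j‖ ^ 2 else 0 := fun n r j => by
    split_ifs <;> positivity
  have hle : ∀ n r j, (if w j < r then ‖u n j‖ ^ 2 else 0) ≤ ‖u n j‖ ^ 2 := fun n r j => by
    split_ifs <;> simp
  have hsum : ∀ n r, Summable fun j => if w j < r then ‖u n j‖ ^ 2 else 0 := fun n r =>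
    (hsq n).of_nonneg_of_le (hnonneg n r) (hle n r)
  have hmass : ∀ ε > 0, ∀ᶠ n in L, ‖u n k‖ ^ 2 < ε := by
    intro ε hε
    obtain ⟨δ, hδε, hδ⟩ := ((hlow.eventually (gt_mem_nhds hε)).and self_mem_nhdsWithin).exists
    have hbounded : IsBoundedUnder (· ≤ ·) L
        fun n => ∑' j, if w j < δ / h n then ‖u n j‖ ^ 2 else 0 :=
      isBoundedUnder_of ⟨M, fun n => ((hsum n _).tsum_le_tsum (hle n _) (hsq n)).trans (hM n)⟩
    have hfreq : ∀ᶠ n in L, w k * h n < δ := by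
      have := hto.const_mul (w k)
      rw [mul_zero] at this
      exact this.eventually (gt_mem_nhds hδ)
    filter_upwards [eventually_lt_of_limsup_lt hδε hbounded, hfreq] with n hn hkn
    have := (hsum n (δ / h n)).le_tsum k fun j _ => hnonneg n _ j
    rw [if_pos ((lt_div_iff₀ (hpos n)).2 hkn)] at this
    exact this.trans_lt hn
  refine NormedAddGroup.tendsto_nhds_zero.2 fun ε hε => ?_
  filter_upwards [hmass (ε ^ 2) (by positivity)] with n hn
  exact lt_of_pow_lt_pow_left₀ 2 hε.le hn

end Limits

section WeakLimits

variable {d : ℕ}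

lemma norm_integral_spacetimeChar_mul_normSq_schrodingerSol_le {c : (Fin d → ℤ) → ℂ}
    (hc : Summable fun k => ‖c k‖ ^ 2) (τ : (Fin d → ℤ) × ℤ) :
    ‖∫ p, spacetimeChar (-τ) p * ((‖schrodingerSol d c p‖ ^ 2 : ℝ) : ℂ)‖ ≤
      (2 * π) ^ (d + 1) * ∑' k : hyperplane (resonance τ), ‖c k‖ * ‖c (k - τ.1)‖ := by
  by_cases hc1 : Summable fun k => ‖c k‖
  · have hsum : Summable fun k : hyperplane (resonance τ) => ‖c k‖ * ‖c (k - τ.1)‖ :=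
      (summable_mul_sub_of_summable_sq hc τ.1).subtype _
    rw [integral_spacetimeChar_mul_normSq_schrodingerSol hc1, norm_mul]
    refine mul_le_mul (by simp [abs_of_pos Real.pi_pos]) ?_ (norm_nonneg _) (by positivity)
    exact tsum_of_norm_bounded hsum.hasSum fun k => by rw [norm_mul, RCLike.norm_conj]
  · rw [schrodingerSol_eq_zero_of_not_summable hc1]
    simp only [Pi.zero_apply, norm_zero, ne_eq, OfNat.ofNat_ne_zero, not_false_eq_true, zero_pow,
      Complex.ofReal_zero, mul_zero, integral_zero]
    exact mul_nonneg (by positivity) (tsum_nonneg fun k => by positivity)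

variable {σ : Type*} {L : Filter σ} {u : σ → (Fin d → ℤ) → ℂ}
  {N : (Fin d → ℤ) × ℤ → ℂ}

lemma tendsto_integral_spacetimeChar_of_weak_star
    {ν : Measure ((Fin d → AddCircle (2 * π)) × AddCircle (2 * π))}
    (hweak : ∀ (g : C(AddCircle (2 * π), ℂ)) (f : C(Fin d → AddCircle (2 * π), ℂ)),
      Tendsto (fun n => ∫ p, g p.2 * f p.1 * ((‖schrodingerSol d (u n) p‖ ^ 2 : ℝ) : ℂ)) L
        (nhds (∫ p, g p.2 * f p.1 ∂ν))) (τ : (Fin d → ℤ) × ℤ) :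
    Tendsto (fun n => ∫ p, spacetimeChar τ p * ((‖schrodingerSol d (u n) p‖ ^ 2 : ℝ) : ℂ)) L
      (nhds (∫ p, spacetimeChar τ p ∂ν)) := by
  let f : C(Fin d → AddCircle (2 * π), ℂ) := ⟨fun x => ∏ i, fourier (τ.1 i) (x i), by fun_prop⟩
  have hchar : ∀ p, fourier τ.2 p.2 * f p.1 = spacetimeChar τ p := fun p => mul_comm _ _
  simpa only [hchar] using hweak (fourier τ.2) f

/-- A finite set of exceptional frequencies contributes nothing in the limit. -/
lemma sum_norm_pow_le_of_tendsto [L.NeBot] (hd : 1 ≤ d)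
    (hsq : ∀ n, Summable fun k => ‖u n k‖ ^ 2) {M : ℝ} (hM : ∀ n, ∑' k, ‖u n k‖ ^ 2 ≤ M)
    (hu : ∀ k, Tendsto (fun n => u n k) L (nhds 0))
    (hN : ∀ τ, Tendsto (fun n => ∫ p, spacetimeChar (-τ) p *
      ((‖schrodingerSol d (u n) p‖ ^ 2 : ℝ) : ℂ)) L (nhds (N τ)))
    {F : Finset ((Fin d → ℤ) × ℤ)} (hF : 0 ∉ F) :
    ∑ τ ∈ F, ‖N τ‖ ^ d ≤ ((2 * π) ^ (d + 1)) ^ d * (d * M ^ d) := by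
  have : Nonempty (Fin d) := ⟨⟨0, hd⟩⟩
  obtain ⟨B, hB⟩ := exists_finset_sum_pow_tsum_resonant_le hF
  rw [Fintype.card_fin] at hB
  let V : ℝ := (2 * π) ^ (d + 1)
  have hV : 0 ≤ V := by positivity
  let bulk (n : σ) (τ : (Fin d → ℤ) × ℤ) : ℝ :=
    V * ∑' k : ↥(hyperplane (resonance τ) \ B), ‖u n k‖ * ‖u n (k - τ.1)‖
  let exceptional (n : σ) (τ : (Fin d → ℤ) × ℤ) : ℝ := V * ∑ k ∈ B, ‖u n k‖ * ‖u n (k - τ.1)‖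
  have hexc : ∀ τ ∈ F, Tendsto (fun n => exceptional n τ) L (nhds 0) := by
    intro τ _
    simpa using (tendsto_finsetSum B fun k _ =>
      (hu k).norm.mul (hu (k - τ.1)).norm).const_mul V
  refine sum_pow_le_of_tendsto (S := bulk) (fun τ _ => (hN τ).norm) hexc
    (fun τ _ => norm_nonneg _) (fun n τ _ => ?_) (fun n τ _ => ?_) fun n => ?_
  · exact mul_nonneg hV (tsum_nonneg fun k => by positivity)
  · rw [← mul_add]
    refine (norm_integral_spacetimeChar_mul_normSq_schrodingerSol_le (hsq n) τ).trans ?_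
    have hsum := summable_mul_sub_of_summable_sq (hsq n) τ.1
    exact mul_le_mul_of_nonneg_left (tsum_subtype_le_tsum_diff_add_sum
      (fun k => mul_nonneg (norm_nonneg _) (norm_nonneg _)) hsum _ B) hV
  · simp only [bulk, mul_pow V, ← Finset.mul_sum]
    refine mul_le_mul_of_nonneg_left (hB (fun k => ‖u n k‖) M fun Q => ?_) (pow_nonneg hV d)
    exact ((hsq n).sum_le_tsum Q fun k _ => sq_nonneg _).trans (hM n)

theorem lp_regularity_of_weak_star_limit_general [L.NeBot] (hd : 1 ≤ d)
    (hsq : ∀ n, Summable fun k => ‖u n k‖ ^ 2) (hbd : ∃ M : ℝ, ∀ n, ∑' k, ‖u n k‖ ^ 2 ≤ M)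
    (hu : ∀ k, Tendsto (fun n => u n k) L (nhds 0))
    (hN : ∀ τ, Tendsto (fun n => ∫ p, spacetimeChar (-τ) p *
      ((‖schrodingerSol d (u n) p‖ ^ 2 : ℝ) : ℂ)) L (nhds (N τ))) :
    Summable fun τ => ‖N τ‖ ^ d := by
  obtain ⟨M, hM⟩ := hbd
  rw [← Finset.summable_compl_iff {0}]
  refine summable_of_sum_le (c := ((2 * π) ^ (d + 1)) ^ d * (d * M ^ d)) (fun τ => by positivity)
    fun F => ?_
  have hF : 0 ∉ F.map (Function.Embedding.subtype (· ∉ ({0} : Finset ((Fin d → ℤ) × ℤ)))) := by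
    simp
  simpa only [Finset.sum_map, Function.Embedding.subtype_apply] using
    sum_norm_pow_le_of_tendsto hd hsq hM hu hN hF

end WeakLimits

/-- Theorem 2: if a bounded sequence `(u_n)` in `L²(𝕋^d)` is `(h_n)`-oscillating
(condition (S)), then any weak-∗ accumulation point `ν` of `(|e^{itΔ}u_n|²)` has Fourier
coefficients in `ℓ^d(ℤ^{d+1})`. -/
theorem lp_regularity_of_weak_star_limit (d : ℕ) (hd : 1 ≤ d)
    (u : ℕ → (Fin d → ℤ) → ℂ)
    (hsq : ∀ n, Summable fun k : Fin d → ℤ => ‖u n k‖ ^ 2)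
    (hbd : ∃ M : ℝ, ∀ n, (∑' k : Fin d → ℤ, ‖u n k‖ ^ 2) ≤ M)
    -- condition (S): there is `h_n → 0`, `h_n > 0`, with no mass at frequencies
    -- `≪ 1/h_n` or `≫ 1/h_n`
    (h : ℕ → ℝ) (hpos : ∀ n, 0 < h n) (hto : Tendsto h atTop (nhds 0))
    (hS1 : Tendsto
      (fun δ : ℝ => limsup
        (fun n => ∑' k : Fin d → ℤ, if znorm k < δ / h n then ‖u n k‖ ^ 2 else 0)
        atTop)
      (nhdsWithin 0 (Set.Ioi 0)) (nhds 0))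
    (hS2 : Tendsto
      (fun R : ℝ => limsup
        (fun n => ∑' k : Fin d → ℤ, if R / h n < znorm k then ‖u n k‖ ^ 2 else 0)
        atTop)
      atTop (nhds 0))
    -- `ν` is a weak-∗ accumulation point of the densities `|e^{itΔ}u_n|²`
    (ν : Measure ((Fin d → AddCircle (2 * π)) × AddCircle (2 * π)))
    [IsFiniteMeasure ν]
    (φ : ℕ → ℕ) (hφ : StrictMono φ)
    (hweak : ∀ (g : C(AddCircle (2 * π), ℂ))
        (f : C(Fin d → AddCircle (2 * π), ℂ)),
      Tendsto
        (fun m => ∫ p, g p.2 * f p.1 *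
          ((‖schrodingerSol d (u (φ m)) p‖ ^ 2 : ℝ) : ℂ) ∂volume)
        atTop (nhds (∫ p, g p.2 * f p.1 ∂ν))) :
    -- then the Fourier coefficients `ν̂(l,s)` of `ν` belong to `ℓ^d(ℤ^{d+1})`
    Summable fun ls : (Fin d → ℤ) × ℤ =>
      ‖∫ p, (∏ i : Fin d, fourier (-(ls.1 i)) (p.1 i)) * fourier (-ls.2) p.2 ∂ν‖ ^ d := by
  have hu : ∀ k, Tendsto (fun m => u (φ m) k) atTop (nhds 0) := fun k =>
    (tendsto_zero_of_tendsto_limsup_zero hsq hbd hpos hto hS1 k).comp hφ.tendsto_atTop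
  exact lp_regularity_of_weak_star_limit_general hd (fun m => hsq (φ m))
    (hbd.imp fun _ hM m => hM (φ m)) hu
    fun τ => tendsto_integral_spacetimeChar_of_weak_star hweak (-τ)
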